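/- Let n be a positive integer and let M₁, …, M_m be real 2n×2n matrices, each lying in the split orthogonal group O(n,n), and each lying either in O⁺⁺(n,n) (both block determinants positive) or in O⁻⁻(n,n) (both block determinants negative). Let k be the number of factors lying in O⁻⁻(n,n). Then (−1)^k · det(I + M_m · M_{m−1} ⋯ M₁) ≥ 0. -/

import Mathlib

open Matrix

/-- The metric `η = diag(I_n, -I_n)` as a `2n × 2n` real matrix. -/
noncomputable def splitMetric (n : ℕ) : Matrix (Fin n ⊕ Fin n) (Fin n ⊕ Fin n) ℝ :=
  Matrix.fromBlocks 1 0 0 (-1)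

theorem det_mul_det_add_nonneg {ι : Type*} [Fintype ι] [DecidableEq ι]
    (P Q : Matrix ι ι ℝ) (h : ∀ t : ℝ, 0 ≤ t → t < 1 → (P + t • Q).det ≠ 0) :
    0 ≤ P.det * (P + Q).det := by
  by_contra! hneg
  let f : ℝ → ℝ := fun t => P.det * (P + t • Q).det
  have hf : Continuous f := by fun_prop
  have h₀ : 0 ≤ f 0 := by simpa [f] using mul_self_nonneg P.det
  have h₁ : f 1 < 0 := by simpa [f] using hneg
  obtain ⟨t, ⟨ht₀, ht₁⟩, ht⟩ :=
    intermediate_value_Icc' zero_le_one hf.continuousOn ⟨h₁.le, h₀⟩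
  have ht_lt : t < 1 := lt_of_le_of_ne ht₁ (by rintro rfl; exact h₁.ne ht)
  have hP : P.det ≠ 0 := by simpa using h 0 le_rfl zero_lt_one
  exact mul_ne_zero hP (h t ht₀ ht_lt) ht

theorem splitMetric_form (n : ℕ) (a b : Fin n → ℝ) :
    Sum.elim a b ⬝ᵥ splitMetric n *ᵥ Sum.elim a b = a ⬝ᵥ a - b ⬝ᵥ b := by
  simp [splitMetric, fromBlocks_mulVec, sumElim_dotProduct_sumElim, neg_mulVec, sub_eq_add_neg]

/-- Matrices preserving `splitMetric n` preserve the quadratic form `|a|² - |b|²`. -/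
theorem splitForm_mulVec {n : ℕ} {M : Matrix (Fin n ⊕ Fin n) (Fin n ⊕ Fin n) ℝ}
    (hM : Mᵀ * splitMetric n * M = splitMetric n) (a b : Fin n → ℝ) :
    (M.toBlocks₁₁ *ᵥ a + M.toBlocks₁₂ *ᵥ b) ⬝ᵥ (M.toBlocks₁₁ *ᵥ a + M.toBlocks₁₂ *ᵥ b) -
      (M.toBlocks₂₁ *ᵥ a + M.toBlocks₂₂ *ᵥ b) ⬝ᵥ (M.toBlocks₂₁ *ᵥ a + M.toBlocks₂₂ *ᵥ b) =
    a ⬝ᵥ a - b ⬝ᵥ b := by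
  have key : M *ᵥ Sum.elim a b = Sum.elim (M.toBlocks₁₁ *ᵥ a + M.toBlocks₁₂ *ᵥ b)
      (M.toBlocks₂₁ *ᵥ a + M.toBlocks₂₂ *ᵥ b) := by
    conv_lhs => rw [← fromBlocks_toBlocks M, fromBlocks_mulVec]
    simp
  rw [← splitMetric_form, ← splitMetric_form, ← key]
  conv_rhs => rw [← hM]
  rw [← mulVec_mulVec, ← mulVec_mulVec, dotProduct_mulVec _ Mᵀ, vecMul_transpose]

theorem dotProduct_self_nonneg_real {ι : Type*} [Fintype ι] (v : ι → ℝ) : 0 ≤ v ⬝ᵥ v :=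
  Finset.sum_nonneg fun i _ => mul_self_nonneg (v i)

theorem det_toBlocks₂₂_ne_zero {n : ℕ} {M : Matrix (Fin n ⊕ Fin n) (Fin n ⊕ Fin n) ℝ}
    (hM : Mᵀ * splitMetric n * M = splitMetric n) : M.toBlocks₂₂.det ≠ 0 := by
  rw [Ne, ← exists_mulVec_eq_zero_iff]
  rintro ⟨v, hv, h⟩
  have := splitForm_mulVec hM 0 v
  simp only [mulVec_zero, zero_add, h, dotProduct_zero, zero_sub, sub_zero] at this
  have h₁ := dotProduct_self_nonneg_real (M.toBlocks₁₂ *ᵥ v)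
  have h₂ := dotProduct_self_nonneg_real v
  exact hv (dotProduct_self_eq_zero.mp (by linarith))

theorem mul_preserves_splitMetric {n : ℕ} {M N : Matrix (Fin n ⊕ Fin n) (Fin n ⊕ Fin n) ℝ}
    (hM : Mᵀ * splitMetric n * M = splitMetric n) (hN : Nᵀ * splitMetric n * N = splitMetric n) :
    (M * N)ᵀ * splitMetric n * (M * N) = splitMetric n := by
  calc (M * N)ᵀ * splitMetric n * (M * N) = Nᵀ * (Mᵀ * splitMetric n * M) * N := by
        simp only [transpose_mul, Matrix.mul_assoc]
    _ = splitMetric n := by rw [hM, hN]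

theorem toBlocks₂₂_mul {n : ℕ} (M N : Matrix (Fin n ⊕ Fin n) (Fin n ⊕ Fin n) ℝ) :
    (M * N).toBlocks₂₂ = M.toBlocks₂₂ * N.toBlocks₂₂ + M.toBlocks₂₁ * N.toBlocks₁₂ := by
  conv_lhs => rw [← fromBlocks_toBlocks M, ← fromBlocks_toBlocks N, fromBlocks_multiply]
  rw [toBlocks_fromBlocks₂₂, add_comm]

/-- The sign of the determinant of the lower right block is multiplicative on `O(n,n)`. -/
theorem det_toBlocks₂₂_mul_pos {n : ℕ} {M N : Matrix (Fin n ⊕ Fin n) (Fin n ⊕ Fin n) ℝ}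
    (hM : Mᵀ * splitMetric n * M = splitMetric n) (hN : Nᵀ * splitMetric n * N = splitMetric n) :
    0 < M.toBlocks₂₂.det * N.toBlocks₂₂.det * (M * N).toBlocks₂₂.det := by
  refine lt_of_le_of_ne ?_ (Ne.symm (mul_ne_zero
    (mul_ne_zero (det_toBlocks₂₂_ne_zero hM) (det_toBlocks₂₂_ne_zero hN))
    (det_toBlocks₂₂_ne_zero (mul_preserves_splitMetric hM hN))))
  rw [toBlocks₂₂_mul, ← det_mul]
  refine det_mul_det_add_nonneg _ _ fun t ht₀ ht₁ => ?_
  rw [Ne, ← exists_mulVec_eq_zero_iff]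
  rintro ⟨v, hv, h⟩
  have hMv := splitForm_mulVec hM (t • N.toBlocks₁₂ *ᵥ v) (N.toBlocks₂₂ *ᵥ v)
  have hker : M.toBlocks₂₁ *ᵥ (t • N.toBlocks₁₂ *ᵥ v) +
      M.toBlocks₂₂ *ᵥ (N.toBlocks₂₂ *ᵥ v) = 0 := by
    rw [← h, add_mulVec, smul_mulVec, mulVec_smul, mulVec_mulVec, mulVec_mulVec, add_comm]
  have hNv := splitForm_mulVec hN 0 v
  simp only [mulVec_zero, zero_add, zero_dotProduct, zero_sub] at hNv
  rw [hker, zero_dotProduct, sub_zero, smul_dotProduct, dotProduct_smul, smul_eq_mul,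
    smul_eq_mul] at hMv
  have h₁ := dotProduct_self_nonneg_real (M.toBlocks₁₁ *ᵥ (t • N.toBlocks₁₂ *ᵥ v) +
    M.toBlocks₁₂ *ᵥ (N.toBlocks₂₂ *ᵥ v))
  have h₂ := dotProduct_self_nonneg_real v
  have h₃ := dotProduct_self_nonneg_real (N.toBlocks₁₂ *ᵥ v)
  have h₄ : t * (t * (N.toBlocks₁₂ *ᵥ v ⬝ᵥ N.toBlocks₁₂ *ᵥ v)) ≤
      N.toBlocks₁₂ *ᵥ v ⬝ᵥ N.toBlocks₁₂ *ᵥ v := by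
    rw [← mul_assoc]
    exact mul_le_of_le_one_left h₃ (mul_le_one₀ ht₁.le ht₀ ht₁.le)
  exact hv (dotProduct_self_eq_zero.mp (by linarith))

/-- For `M = [A, B; C, D]` in `O(n,n)`, the matrices `P = [1, 0; C, D]` and `Q = [A, B; 0, 1]`
satisfy `|P x| = |Q x|`, `det P = det D` and `P + Q = 1 + M`. -/
theorem det_toBlocks₂₂_mul_det_one_add_nonneg {n : ℕ}
    {M : Matrix (Fin n ⊕ Fin n) (Fin n ⊕ Fin n) ℝ}
    (hM : Mᵀ * splitMetric n * M = splitMetric n) :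
    0 ≤ M.toBlocks₂₂.det * (1 + M).det := by
  let P : Matrix (Fin n ⊕ Fin n) (Fin n ⊕ Fin n) ℝ := fromBlocks 1 0 M.toBlocks₂₁ M.toBlocks₂₂
  let Q : Matrix (Fin n ⊕ Fin n) (Fin n ⊕ Fin n) ℝ := fromBlocks M.toBlocks₁₁ M.toBlocks₁₂ 0 1
  have hP : P.det = M.toBlocks₂₂.det := by simp [P]
  have hPQ : P + Q = 1 + M := by
    conv_rhs => rw [← fromBlocks_toBlocks M, ← fromBlocks_one, fromBlocks_add]
    simp [P, Q, fromBlocks_add, add_comm]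
  rw [← hP, ← hPQ]
  refine det_mul_det_add_nonneg _ _ fun t ht₀ ht₁ => ?_
  rw [Ne, ← exists_mulVec_eq_zero_iff]
  rintro ⟨v, hv, h⟩
  have hnorm : Q *ᵥ v ⬝ᵥ Q *ᵥ v = P *ᵥ v ⬝ᵥ P *ᵥ v := by
    have := splitForm_mulVec hM (v ∘ Sum.inl) (v ∘ Sum.inr)
    simp only [P, Q, fromBlocks_mulVec, sumElim_dotProduct_sumElim, one_mulVec, zero_mulVec,
      add_zero, zero_add]
    linarith
  have hPv : P *ᵥ v = -(t • Q *ᵥ v) := by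
    rw [add_mulVec, smul_mulVec] at h
    exact eq_neg_of_add_eq_zero_left h
  have hsq : P *ᵥ v ⬝ᵥ P *ᵥ v = t * t * (P *ᵥ v ⬝ᵥ P *ᵥ v) := by
    conv_lhs => rw [hPv]
    rw [neg_dotProduct_neg, smul_dotProduct, dotProduct_smul, hnorm, smul_eq_mul, smul_eq_mul,
      mul_assoc]
  have hzero : P *ᵥ v = 0 := by
    refine dotProduct_self_eq_zero.mp ?_
    have htt : (1 - t * t) ≠ 0 := by nlinarith
    exact (mul_eq_zero.mp (by linarith : (1 - t * t) * (P *ᵥ v ⬝ᵥ P *ᵥ v) = 0)).resolve_left htt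
  exact det_toBlocks₂₂_ne_zero hM (hP ▸ exists_mulVec_eq_zero_iff.mp ⟨v, hv, hzero⟩)

theorem list_prod_preserves_splitMetric_and_sign {n : ℕ}
    (L : List (Matrix (Fin n ⊕ Fin n) (Fin n ⊕ Fin n) ℝ))
    (hL : ∀ M ∈ L, Mᵀ * splitMetric n * M = splitMetric n) :
    L.prodᵀ * splitMetric n * L.prod = splitMetric n ∧
      0 < (L.map fun M => M.toBlocks₂₂.det).prod * L.prod.toBlocks₂₂.det := by
  induction L with
  | nil =>
    have h : (1 : Matrix (Fin n ⊕ Fin n) (Fin n ⊕ Fin n) ℝ).toBlocks₂₂ = 1 := by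
      rw [← fromBlocks_one, toBlocks_fromBlocks₂₂]
    simp [h]
  | cons M L ih =>
    obtain ⟨hprod, hpos⟩ := ih fun N hN => hL N (List.mem_cons_of_mem _ hN)
    have hM := hL M List.mem_cons_self
    rw [List.map_cons, List.prod_cons, List.prod_cons]
    refine ⟨mul_preserves_splitMetric hM hprod, ?_⟩
    have h := mul_pos hpos (det_toBlocks₂₂_mul_pos hM hprod)
    have hsq := mul_self_pos.mpr (det_toBlocks₂₂_ne_zero hprod)
    refine pos_of_mul_pos_left (b := L.prod.toBlocks₂₂.det * L.prod.toBlocks₂₂.det) ?_ hsq.le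
    linarith

theorem det_one_add_prod_sign (n : ℕ) (hn : 0 < n) (m : ℕ)
    (M : Fin m → Matrix (Fin n ⊕ Fin n) (Fin n ⊕ Fin n) ℝ)
    (hM : ∀ i, (M i)ᵀ * splitMetric n * M i = splitMetric n)
    (hcomp : ∀ i, (0 < (M i).toBlocks₁₁.det ∧ 0 < (M i).toBlocks₂₂.det) ∨
      ((M i).toBlocks₁₁.det < 0 ∧ (M i).toBlocks₂₂.det < 0)) :
    0 ≤ (-1 : ℝ) ^ (Finset.univ.filter fun i => (M i).toBlocks₁₁.det < 0).card *
      (1 + (List.ofFn fun i => M i).prod).det := by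
  obtain ⟨hprod, hpos⟩ := list_prod_preserves_splitMetric_and_sign (List.ofFn fun i => M i) (by
    simpa [List.mem_ofFn] using hM)
  have hdet := det_toBlocks₂₂_mul_det_one_add_nonneg hprod
  have hsign : 0 < (-1 : ℝ) ^ (Finset.univ.filter fun i => (M i).toBlocks₁₁.det < 0).card *
      ∏ i, (M i).toBlocks₂₂.det := by
    rw [← Finset.prod_const, Finset.prod_filter, ← Finset.prod_mul_distrib]
    refine Finset.prod_pos fun i _ => ?_
    rcases hcomp i with ⟨h₁, h₂⟩ | ⟨h₁, h₂⟩
    · simpa [h₁.not_gt] using h₂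
    · simpa [h₁] using h₂
  rw [List.map_ofFn, List.prod_ofFn] at hpos
  simp only [Function.comp_apply] at hpos
  have hall := mul_nonneg (mul_pos hsign hpos).le hdet
  set p := ∏ i, (M i).toBlocks₂₂.det
  set d := (List.ofFn fun i => M i).prod.toBlocks₂₂.det
  have hpd : 0 < (p * d) * (p * d) := mul_pos hpos hpos
  refine nonneg_of_mul_nonneg_left (b := (p * d) * (p * d)) ?_ hpd
  linarith
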